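/- Let (g₀, g₋₁, l₁, l₂, l₃) be a 2-term L∞-algebra over ℝ. Then the associated data g̃ (with g̃₋₁ = g₋₁, g̃₀ = g₀ ⊕ Hom(g₀, g₋₁), and structure maps l̃₁, l̃₂, l̃₃ defined by the explicit formulas below) is again a 2-term L∞-algebra, i.e. (g̃₀, g̃₋₁, l̃₁, l̃₂, l̃₃) satisfies the identities (a)–(e). -/

import Mathlib

/-- A 2-term L∞-algebra over ℝ: vector spaces `G0` (degree 0) and `G1` (degree -1),
a linear map `l1 : G1 → G0`, a skew-symmetric bilinear map `l2 : G0 × G0 → G0`,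
a bilinear map `l2' : G0 × G1 → G1`, and an alternating trilinear map
`l3 : G0 × G0 × G0 → G1` satisfying the 2-term L∞ identities (a)-(e). -/
structure TwoTermLinfty (G0 G1 : Type*) [AddCommGroup G0] [Module ℝ G0]
    [AddCommGroup G1] [Module ℝ G1] where
  l1 : G1 →ₗ[ℝ] G0
  l2 : G0 →ₗ[ℝ] G0 →ₗ[ℝ] G0
  l2' : G0 →ₗ[ℝ] G1 →ₗ[ℝ] G1
  l3 : G0 →ₗ[ℝ] G0 →ₗ[ℝ] G0 →ₗ[ℝ] G1
  skew : ∀ x y, l2 x y = - l2 y x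
  alt₁ : ∀ x y z, l3 x y z = - l3 y x z
  alt₂ : ∀ x y z, l3 x y z = - l3 x z y
  ident_a : ∀ x m, l1 (l2' x m) = l2 x (l1 m)
  ident_b : ∀ m n, l2' (l1 m) n = - l2' (l1 n) m
  ident_c : ∀ x y z,
    l2 x (l2 y z) + l2 y (l2 z x) + l2 z (l2 x y) = l1 (l3 x y z)
  ident_d : ∀ x y m,
    l3 x y (l1 m) = l2' x (l2' y m) - l2' y (l2' x m) - l2' (l2 x y) m
  ident_e : ∀ w x y z,
    l3 (l2 w x) y z - l3 (l2 w y) x z + l3 (l2 w z) x y + l3 (l2 x y) w z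
      - l3 (l2 x z) w y + l3 (l2 y z) w x
    = l2' w (l3 x y z) - l2' x (l3 w y z) + l2' y (l3 w x z) - l2' z (l3 w x y)

namespace TwoTermLinfty

set_option linter.unusedSimpArgs false

variable {G0 G1 : Type*} [AddCommGroup G0] [Module ℝ G0] [AddCommGroup G1] [Module ℝ G1]

/-! Rewriting rules derived from the axioms. -/

theorem l2_l1 (T : TwoTermLinfty G0 G1) (x : G0) (m : G1) :
    T.l2 x (T.l1 m) = T.l1 (T.l2' x m) := (T.ident_a x m).symm

theorem l2_l1_left (T : TwoTermLinfty G0 G1) (x : G0) (m : G1) :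
    T.l2 (T.l1 m) x = - T.l1 (T.l2' x m) := by
  rw [T.skew, T.ident_a]

theorem l3_l1_mid (T : TwoTermLinfty G0 G1) (x y : G0) (m : G1) :
    T.l3 x (T.l1 m) y = - (T.l2' x (T.l2' y m) - T.l2' y (T.l2' x m) - T.l2' (T.l2 x y) m) := by
  rw [T.alt₂, T.ident_d]

theorem l3_l1_left (T : TwoTermLinfty G0 G1) (x y : G0) (m : G1) :
    T.l3 (T.l1 m) x y = T.l2' x (T.l2' y m) - T.l2' y (T.l2' x m) - T.l2' (T.l2 x y) m := by
  rw [T.alt₁, T.l3_l1_mid, neg_neg]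

theorem jac (T : TwoTermLinfty G0 G1) (x y z : G0) :
    T.l2 x (T.l2 y z) = T.l1 (T.l3 x y z) - T.l2 y (T.l2 z x) - T.l2 z (T.l2 x y) := by
  rw [← T.ident_c]; abel

theorem ee (T : TwoTermLinfty G0 G1) (w x y z : G0) :
    T.l3 (T.l2 y z) w x =
      T.l2' w (T.l3 x y z) - T.l2' x (T.l3 w y z) + T.l2' y (T.l3 w x z) - T.l2' z (T.l3 w x y)
      - T.l3 (T.l2 w x) y z + T.l3 (T.l2 w y) x z - T.l3 (T.l2 w z) x y - T.l3 (T.l2 x y) w z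
      + T.l3 (T.l2 x z) w y := by
  rw [← T.ident_e]; abel

/-! The structure maps of the associated data. -/

/-- The bracket on degree zero elements. -/
noncomputable def tl2 (T : TwoTermLinfty G0 G1) :
    (G0 × (G0 →ₗ[ℝ] G1)) →ₗ[ℝ] (G0 × (G0 →ₗ[ℝ] G1)) →ₗ[ℝ] (G0 × (G0 →ₗ[ℝ] G1)) :=
  LinearMap.mk₂ ℝ (fun a b =>
        (T.l2 a.1 b.1 + (1/2 : ℝ) • T.l1 (a.2 b.1) - (1/2 : ℝ) • T.l1 (b.2 a.1),
         T.l3 a.1 b.1 + (T.l2' a.1) ∘ₗ b.2 - b.2 ∘ₗ (T.l2 a.1)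
           - (1/2 : ℝ) • T.l2'.flip (b.2 a.1)
           - (T.l2' b.1) ∘ₗ a.2 + a.2 ∘ₗ (T.l2 b.1)
           + (1/2 : ℝ) • T.l2'.flip (a.2 b.1)
           + a.2 ∘ₗ (T.l1 ∘ₗ b.2) - b.2 ∘ₗ (T.l1 ∘ₗ a.2)))
    (by
      rintro ⟨x, f⟩ ⟨x', f'⟩ ⟨y, g⟩
      refine Prod.ext ?_ (LinearMap.ext fun z => ?_) <;> simp <;> module)
    (by
      rintro c ⟨x, f⟩ ⟨y, g⟩
      refine Prod.ext ?_ (LinearMap.ext fun z => ?_) <;> simp <;> module)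
    (by
      rintro ⟨x, f⟩ ⟨x', f'⟩ ⟨y, g⟩
      refine Prod.ext ?_ (LinearMap.ext fun z => ?_) <;> simp <;> module)
    (by
      rintro c ⟨x, f⟩ ⟨y, g⟩
      refine Prod.ext ?_ (LinearMap.ext fun z => ?_) <;> simp <;> module)

/-- The action of degree zero elements on degree minus one elements. -/
noncomputable def tl2' (T : TwoTermLinfty G0 G1) :
    (G0 × (G0 →ₗ[ℝ] G1)) →ₗ[ℝ] G1 →ₗ[ℝ] G1 :=
  LinearMap.mk₂ ℝ (fun a n => (1/2 : ℝ) • T.l2' a.1 n + (1/2 : ℝ) • a.2 (T.l1 n))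
    (by rintro ⟨x, f⟩ ⟨x', f'⟩ n; simp; module)
    (by rintro c ⟨x, f⟩ n; simp; module)
    (by rintro ⟨x, f⟩ m n; simp; module)
    (by rintro c ⟨x, f⟩ n; simp; module)

/-- The formula for the ternary bracket. -/
noncomputable def tl3fun (T : TwoTermLinfty G0 G1) (a b c : G0 × (G0 →ₗ[ℝ] G1)) : G1 :=
        -(1/2 : ℝ) • T.l3 a.1 b.1 c.1
        - (1/2 : ℝ) • (c.2 (T.l2 a.1 b.1) + a.2 (T.l2 b.1 c.1) + b.2 (T.l2 c.1 a.1))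
        - (1/4 : ℝ) • (c.2 (T.l1 (a.2 b.1)) - c.2 (T.l1 (b.2 a.1))
            + a.2 (T.l1 (b.2 c.1)) - a.2 (T.l1 (c.2 b.1))
            + b.2 (T.l1 (c.2 a.1)) - b.2 (T.l1 (a.2 c.1)))
        - (1/4 : ℝ) • (T.l2' a.1 (b.2 c.1) - T.l2' a.1 (c.2 b.1)
            + T.l2' b.1 (c.2 a.1) - T.l2' b.1 (a.2 c.1)
            + T.l2' c.1 (a.2 b.1) - T.l2' c.1 (b.2 a.1))

/-- The ternary bracket. -/
noncomputable def tl3 (T : TwoTermLinfty G0 G1) :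
    (G0 × (G0 →ₗ[ℝ] G1)) →ₗ[ℝ] (G0 × (G0 →ₗ[ℝ] G1)) →ₗ[ℝ] (G0 × (G0 →ₗ[ℝ] G1)) →ₗ[ℝ] G1 :=
  LinearMap.mk₂ ℝ (fun a b =>
    { toFun := fun c => T.tl3fun a b c
      map_add' := by rintro ⟨z, h⟩ ⟨z', h'⟩; simp [tl3fun]; module
      map_smul' := by rintro r ⟨z, h⟩; simp [tl3fun]; module })
    (by rintro ⟨x, f⟩ ⟨x', f'⟩ ⟨y, g⟩; refine LinearMap.ext ?_; rintro ⟨z, h⟩; simp [tl3fun]; module)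
    (by rintro c ⟨x, f⟩ ⟨y, g⟩; refine LinearMap.ext ?_; rintro ⟨z, h⟩; simp [tl3fun]; module)
    (by rintro ⟨x, f⟩ ⟨x', f'⟩ ⟨y, g⟩; refine LinearMap.ext ?_; rintro ⟨z, h⟩; simp [tl3fun]; module)
    (by rintro c ⟨x, f⟩ ⟨y, g⟩; refine LinearMap.ext ?_; rintro ⟨z, h⟩; simp [tl3fun]; module)

theorem tl2_mk (T : TwoTermLinfty G0 G1) (x y : G0) (f g : G0 →ₗ[ℝ] G1) :
    T.tl2 (x, f) (y, g) =
      (T.l2 x y + (1/2 : ℝ) • T.l1 (f y) - (1/2 : ℝ) • T.l1 (g x),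
         T.l3 x y + (T.l2' x) ∘ₗ g - g ∘ₗ (T.l2 x) - (1/2 : ℝ) • T.l2'.flip (g x)
           - (T.l2' y) ∘ₗ f + f ∘ₗ (T.l2 y) + (1/2 : ℝ) • T.l2'.flip (f y)
           + f ∘ₗ (T.l1 ∘ₗ g) - g ∘ₗ (T.l1 ∘ₗ f)) := rfl

theorem tl2'_mk (T : TwoTermLinfty G0 G1) (x : G0) (f : G0 →ₗ[ℝ] G1) (n : G1) :
    T.tl2' (x, f) n = (1/2 : ℝ) • T.l2' x n + (1/2 : ℝ) • f (T.l1 n) := rfl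

theorem tl3_mk (T : TwoTermLinfty G0 G1) (x y z : G0) (f g h : G0 →ₗ[ℝ] G1) :
    T.tl3 (x, f) (y, g) (z, h) =
        -(1/2 : ℝ) • T.l3 x y z
        - (1/2 : ℝ) • (h (T.l2 x y) + f (T.l2 y z) + g (T.l2 z x))
        - (1/4 : ℝ) • (h (T.l1 (f y)) - h (T.l1 (g x))
            + f (T.l1 (g z)) - f (T.l1 (h y))
            + g (T.l1 (h x)) - g (T.l1 (f z)))
        - (1/4 : ℝ) • (T.l2' x (g z) - T.l2' x (h y)
            + T.l2' y (h x) - T.l2' y (f z)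
            + T.l2' z (f y) - T.l2' z (g x)) := rfl

set_option maxHeartbeats 4000000 in
theorem tilde_c (T : TwoTermLinfty G0 G1) (x1 x2 x3 : G0) (f1 f2 f3 : G0 →ₗ[ℝ] G1) :
    T.tl2 (x1, f1) (T.tl2 (x2, f2) (x3, f3)) + T.tl2 (x2, f2) (T.tl2 (x3, f3) (x1, f1))
      + T.tl2 (x3, f3) (T.tl2 (x1, f1) (x2, f2))
    = (T.l1 (T.tl3 (x1, f1) (x2, f2) (x3, f3)), T.l2'.flip (T.tl3 (x1, f1) (x2, f2) (x3, f3))) := by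
  refine Prod.ext ?_ (LinearMap.ext fun z => ?_)
  · simp only [tl2_mk, tl3_mk, Prod.fst_add, map_add, map_sub, map_neg, map_smul, smul_add,
      smul_sub, smul_neg, neg_smul, LinearMap.add_apply, LinearMap.sub_apply, LinearMap.neg_apply,
      LinearMap.smul_apply, LinearMap.comp_apply, LinearMap.flip_apply, neg_neg,
      l2_l1, l2_l1_left, l3_l1_mid, l3_l1_left, ident_d,
    T.alt₂ x2 x3 x1, T.alt₁ x2 x1 x3, T.skew x2 x1, T.skew x3 x1, T.alt₁ x3 x1 x2, T.alt₂ x1 x3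
    x2, T.skew x3 x2, T.jac x3 x1 x2]
    module
  · simp only [tl2_mk, tl3_mk, Prod.snd_add, map_add, map_sub, map_neg, map_smul, smul_add,
      smul_sub, smul_neg, neg_smul, LinearMap.add_apply, LinearMap.sub_apply, LinearMap.neg_apply,
      LinearMap.smul_apply, LinearMap.comp_apply, LinearMap.flip_apply, neg_neg,
      l2_l1, l2_l1_left, l3_l1_mid, l3_l1_left, ident_d,
    T.alt₁ x1 (T.l2 x2 x3) z, T.alt₂ x2 x3 (T.l2 x1 z), T.alt₁ x2 (T.l2 x1 z) x3, T.alt₂ x2 x3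
    x1, T.alt₁ x2 x1 x3, T.skew x2 x1, T.ident_b (f2 x3) (f1 z), T.ident_b (f3 x2) (f1 z),
    T.skew (T.l2 x2 x3) z, T.jac z x2 x3, T.alt₁ z x2 x3, T.alt₂ x2 z x3, T.skew z x2, T.skew x3
    x1, T.alt₁ x2 (T.l2 x1 x3) z, T.alt₁ x3 x1 z, T.alt₁ x3 x1 (T.l2 x2 z), T.alt₂ x1 x3 (T.l2
    x2 z), T.alt₁ x1 (T.l2 x2 z) x3, T.alt₁ x3 x1 x2, T.alt₂ x1 x3 x2, T.skew x3 x2, T.ident_b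
    (f3 x1) (f2 z), T.skew (T.l2 x1 x3) z, T.jac z x1 x3, T.alt₁ z x1 x3, T.alt₂ x1 z x3, T.skew
    z x1, T.ident_b (f2 z) (f1 x3), T.alt₁ x3 (T.l2 x1 x2) z, T.alt₂ x1 x2 (T.l2 x3 z), T.alt₁
    x1 (T.l2 x3 z) x2, T.ee x1 x2 x3 z, T.skew (T.l2 x1 x2) z, T.jac z x1 x2, T.alt₁ z x1 x2,
    T.alt₂ x1 z x2, T.ident_b (f3 z) (f2 x1), T.ident_b (f3 z) (f1 x2)]
    module

set_option maxHeartbeats 4000000 in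
theorem tilde_e (T : TwoTermLinfty G0 G1) (x1 x2 x3 x4 : G0) (f1 f2 f3 f4 : G0 →ₗ[ℝ] G1) :
    T.tl3 (T.tl2 (x1, f1) (x2, f2)) (x3, f3) (x4, f4)
      - T.tl3 (T.tl2 (x1, f1) (x3, f3)) (x2, f2) (x4, f4)
      + T.tl3 (T.tl2 (x1, f1) (x4, f4)) (x2, f2) (x3, f3)
      + T.tl3 (T.tl2 (x2, f2) (x3, f3)) (x1, f1) (x4, f4)
      - T.tl3 (T.tl2 (x2, f2) (x4, f4)) (x1, f1) (x3, f3)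
      + T.tl3 (T.tl2 (x3, f3) (x4, f4)) (x1, f1) (x2, f2)
    = T.tl2' (x1, f1) (T.tl3 (x2, f2) (x3, f3) (x4, f4))
      - T.tl2' (x2, f2) (T.tl3 (x1, f1) (x3, f3) (x4, f4))
      + T.tl2' (x3, f3) (T.tl3 (x1, f1) (x2, f2) (x4, f4))
      - T.tl2' (x4, f4) (T.tl3 (x1, f1) (x2, f2) (x3, f3)) := by
  simp only [tl2_mk, tl3_mk, tl2'_mk, map_add, map_sub, map_neg, map_smul, smul_add,
      smul_sub, smul_neg, neg_smul, LinearMap.add_apply, LinearMap.sub_apply, LinearMap.neg_apply,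
      LinearMap.smul_apply, LinearMap.comp_apply, LinearMap.flip_apply, neg_neg,
      l2_l1, l2_l1_left, l3_l1_mid, l3_l1_left, ident_d,
    T.skew (T.l2 x1 x2) x3, T.jac x3 x1 x2, T.alt₁ x3 x1 x2, T.alt₂ x1 x3 x2, T.skew x3 x1,
    T.alt₂ x1 x2 (T.l2 x3 x4), T.alt₁ x1 (T.l2 x3 x4) x2, T.ee x1 x2 x3 x4, T.jac x4 x1 x2,
    T.alt₁ x4 x1 x2, T.alt₂ x1 x4 x2, T.skew x4 x1, T.ident_b (f3 x4) (f2 x1), T.ident_b (f3 x4)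
    (f1 x2), T.ident_b (f4 x3) (f2 x1), T.ident_b (f4 x3) (f1 x2), T.skew (T.l2 x1 x3) x2,
    T.alt₂ x1 x3 (T.l2 x2 x4), T.alt₁ x1 (T.l2 x2 x4) x3, T.jac x4 x1 x3, T.alt₁ x4 x1 x3,
    T.alt₂ x1 x4 x3, T.skew x3 x2, T.ident_b (f2 x4) (f1 x3), T.ident_b (f4 x2) (f3 x1),
    T.ident_b (f4 x2) (f1 x3), T.ident_b (f3 x1) (f2 x4), T.skew (T.l2 x1 x4) x2, T.alt₂ x1 x4
    (T.l2 x2 x3), T.alt₁ x1 (T.l2 x2 x3) x4, T.jac x4 x2 x3, T.alt₁ x4 x2 x3, T.alt₂ x2 x4 x3,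
    T.skew x4 x2, T.ident_b (f2 x3) (f1 x4), T.ident_b (f3 x2) (f1 x4), T.skew x4 x3, T.ident_b
    (f4 x1) (f2 x3), T.ident_b (f4 x1) (f3 x2), T.skew (T.l2 x2 x3) x1, T.alt₂ x2 x3 (T.l2 x1
    x4), T.alt₁ x2 (T.l2 x1 x4) x3, T.alt₂ x2 x3 x1, T.alt₁ x2 x1 x3, T.skew x2 x1, T.skew (T.l2
    x2 x4) x1, T.alt₂ x2 x4 (T.l2 x1 x3), T.alt₁ x2 (T.l2 x1 x3) x4, T.alt₂ x2 x4 x1, T.alt₁ x2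
    x1 x4, T.skew (T.l2 x3 x4) x1, T.alt₂ x3 x4 (T.l2 x1 x2), T.alt₁ x3 (T.l2 x1 x2) x4, T.alt₂
    x3 x4 x1, T.alt₁ x3 x1 x4, T.alt₂ x3 x4 x2, T.alt₁ x3 x2 x4]
  module

/-- The associated 2-term L∞-algebra. -/
noncomputable def tilde (T : TwoTermLinfty G0 G1) :
    TwoTermLinfty (G0 × (G0 →ₗ[ℝ] G1)) G1 where
  l1 := T.l1.prod T.l2'.flip
  l2 := T.tl2
  l2' := T.tl2'
  l3 := T.tl3
  skew := by
    rintro ⟨x, f⟩ ⟨y, g⟩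
    refine Prod.ext ?_ (LinearMap.ext fun z => ?_)
    · simp [tl2_mk, T.skew y x]; module
    · simp [tl2_mk, T.alt₁ y x z]; module
  alt₁ := by
    rintro ⟨x, f⟩ ⟨y, g⟩ ⟨z, h⟩
    simp only [tl3_mk, T.alt₁ y x z, T.skew y x, T.skew z y, T.skew z x, map_neg]; module
  alt₂ := by
    rintro ⟨x, f⟩ ⟨y, g⟩ ⟨z, h⟩
    simp only [tl3_mk, T.alt₂ x z y, T.skew y x, T.skew z y, T.skew z x, map_neg]; module
  ident_a := by
    rintro ⟨x, f⟩ m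
    refine Prod.ext ?_ (LinearMap.ext fun z => ?_)
    · simp [tl2_mk, tl2'_mk, l2_l1]; module
    · simp [tl2_mk, tl2'_mk, l2_l1, l2_l1_left, l3_l1_mid, T.ident_b m (f z)]; module
  ident_b := by
    intro m n
    simp [tl2'_mk, T.ident_b n m]
  ident_c := by
    rintro ⟨x, f⟩ ⟨y, g⟩ ⟨z, h⟩
    exact T.tilde_c x y z f g h
  ident_d := by
    rintro ⟨x, f⟩ ⟨y, g⟩ m
    simp [tl2_mk, tl2'_mk, tl3_mk, l2_l1, l2_l1_left, ident_d]; module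
  ident_e := by
    rintro ⟨w, f⟩ ⟨x, g⟩ ⟨y, h⟩ ⟨z, k⟩
    exact T.tilde_e w x y z f g h k

end TwoTermLinfty

/-- Theorem 4.2 of Lang–Sheng–Xu: given a 2-term L∞-algebra `(G0, G1, l1, l2, l2', l3)`,
the associated data `g̃` with `g̃₋₁ = G1`, `g̃₀ = G0 ⊕ Hom(G0, G1)` and the explicit
structure maps `l̃₁, l̃₂, l̃₃` is again a 2-term L∞-algebra. -/
theorem tilde_is_twoTermLinfty {G0 G1 : Type*} [AddCommGroup G0] [Module ℝ G0]
    [AddCommGroup G1] [Module ℝ G1] (T : TwoTermLinfty G0 G1) :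
    ∃ Tt : TwoTermLinfty (G0 × (G0 →ₗ[ℝ] G1)) G1,
      -- l̃₁(n) = (l₁(n), z ↦ l₂(z,n))
      (∀ n : G1, Tt.l1 n = (T.l1 n, T.l2'.flip n)) ∧
      -- l̃₂((x,φ),(y,ψ))
      (∀ a b : G0 × (G0 →ₗ[ℝ] G1), Tt.l2 a b =
        (T.l2 a.1 b.1 + (1/2 : ℝ) • T.l1 (a.2 b.1) - (1/2 : ℝ) • T.l1 (b.2 a.1),
         T.l3 a.1 b.1 + (T.l2' a.1) ∘ₗ b.2 - b.2 ∘ₗ (T.l2 a.1)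
           - (1/2 : ℝ) • T.l2'.flip (b.2 a.1)
           - (T.l2' b.1) ∘ₗ a.2 + a.2 ∘ₗ (T.l2 b.1)
           + (1/2 : ℝ) • T.l2'.flip (a.2 b.1)
           + a.2 ∘ₗ (T.l1 ∘ₗ b.2) - b.2 ∘ₗ (T.l1 ∘ₗ a.2))) ∧
      -- l̃₂((x,φ),n)
      (∀ (a : G0 × (G0 →ₗ[ℝ] G1)) (n : G1), Tt.l2' a n =
        (1/2 : ℝ) • T.l2' a.1 n + (1/2 : ℝ) • a.2 (T.l1 n)) ∧
      -- l̃₃((x₁,φ₁),(x₂,φ₂),(x₃,φ₃))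
      (∀ a b c : G0 × (G0 →ₗ[ℝ] G1), Tt.l3 a b c =
        -(1/2 : ℝ) • T.l3 a.1 b.1 c.1
        - (1/2 : ℝ) • (c.2 (T.l2 a.1 b.1) + a.2 (T.l2 b.1 c.1) + b.2 (T.l2 c.1 a.1))
        - (1/4 : ℝ) • (c.2 (T.l1 (a.2 b.1)) - c.2 (T.l1 (b.2 a.1))
            + a.2 (T.l1 (b.2 c.1)) - a.2 (T.l1 (c.2 b.1))
            + b.2 (T.l1 (c.2 a.1)) - b.2 (T.l1 (a.2 c.1)))
        - (1/4 : ℝ) • (T.l2' a.1 (b.2 c.1) - T.l2' a.1 (c.2 b.1)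
            + T.l2' b.1 (c.2 a.1) - T.l2' b.1 (a.2 c.1)
            + T.l2' c.1 (a.2 b.1) - T.l2' c.1 (b.2 a.1))) := by
  exact ⟨T.tilde, fun _ => rfl, fun _ _ => rfl, fun _ _ => rfl, fun _ _ _ => rfl⟩
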